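/- Let A = A(ω, ε) be the 4×4 Toh matrix with 0 < ω < 2 and ε > 0. Then φ_3(A) = Ψ_{3,ℝ,ℂ}(A), i.e., the third ideal GMRES approximation of A is attained as the worst case over complex unit initial vectors when minimizing over real polynomials. -/

import Mathlib

open Polynomial Matrix

/-- The Euclidean norm of a real vector. -/
noncomputable def euclNorm {ι : Type*} [Fintype ι] (v : ι → ℝ) : ℝ :=
  Real.sqrt (∑ i, v i ^ 2)

/-- The Euclidean norm of a complex vector. -/
noncomputable def euclNormC {ι : Type*} [Fintype ι] (v : ι → ℂ) : ℝ :=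
  Real.sqrt (∑ i, ‖v i‖ ^ 2)

/-- The Euclidean inner product of two real vectors. -/
noncomputable def edot {ι : Type*} [Fintype ι] (u v : ι → ℝ) : ℝ := ∑ i, u i * v i

/-- `p ∈ π_k`: real polynomials of degree at most `k` with value `1` at the origin. -/
def IsPik (k : ℕ) (p : Polynomial ℝ) : Prop := p.natDegree ≤ k ∧ p.eval 0 = 1

/-- `p ∈ π_{k,ℂ}`: complex polynomials of degree at most `k` with value `1` at the origin. -/
def IsPikC (k : ℕ) (p : Polynomial ℂ) : Prop := p.natDegree ≤ k ∧ p.eval 0 = 1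

/-- The `k`-th GMRES residual norm `min_{p ∈ π_k} ‖p(A)v‖`. -/
noncomputable def gmresVal {ι : Type*} [Fintype ι] [DecidableEq ι]
    (A : Matrix ι ι ℝ) (k : ℕ) (v : ι → ℝ) : ℝ :=
  sInf {s : ℝ | ∃ p : Polynomial ℝ, IsPik k p ∧ s = euclNorm ((Polynomial.aeval A p).mulVec v)}

/-- The `k`-th worst-case GMRES approximation `Ψ_k(A) = max_{‖v‖=1} min_{p ∈ π_k} ‖p(A)v‖`. -/
noncomputable def Psi {ι : Type*} [Fintype ι] [DecidableEq ι]
    (A : Matrix ι ι ℝ) (k : ℕ) : ℝ :=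
  sSup {r : ℝ | ∃ v : ι → ℝ, euclNorm v = 1 ∧ r = gmresVal A k v}

/-- `d(A)`: the degree of the minimal polynomial of `A`. -/
noncomputable def dA {ι : Type*} [Fintype ι] [DecidableEq ι] (A : Matrix ι ι ℝ) : ℕ :=
  (minpoly ℝ A).natDegree

/-- `d(A,b)`: the smallest degree of a nonzero polynomial `q` with `q(A)b = 0`. -/
noncomputable def dAb {ι : Type*} [Fintype ι] [DecidableEq ι]
    (A : Matrix ι ι ℝ) (b : ι → ℝ) : ℕ :=
  sInf {d : ℕ | ∃ q : Polynomial ℝ, q ≠ 0 ∧ q.natDegree = d ∧ (Polynomial.aeval A q).mulVec b = 0}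

/-- `r = GMRES(A,b,k)`: `r = p(A)b` for some `p ∈ π_k` minimizing `‖p(A)b‖` over `π_k`. -/
def IsGmresRes {ι : Type*} [Fintype ι] [DecidableEq ι]
    (A : Matrix ι ι ℝ) (k : ℕ) (b r : ι → ℝ) : Prop :=
  ∃ p : Polynomial ℝ, IsPik k p ∧ r = (Polynomial.aeval A p).mulVec b ∧
    ∀ q : Polynomial ℝ, IsPik k q → euclNorm r ≤ euclNorm ((Polynomial.aeval A q).mulVec b)

/-- `p` is the `k`-th GMRES polynomial of `A` and `b`: `p ∈ π_k` minimizes `‖p(A)b‖`. -/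
def IsGmresPoly {ι : Type*} [Fintype ι] [DecidableEq ι]
    (A : Matrix ι ι ℝ) (k : ℕ) (b : ι → ℝ) (p : Polynomial ℝ) : Prop :=
  IsPik k p ∧ ∀ q : Polynomial ℝ, IsPik k q →
    euclNorm ((Polynomial.aeval A p).mulVec b) ≤ euclNorm ((Polynomial.aeval A q).mulVec b)

/-- The Krylov subspace `K_k(A,b) = span{b, Ab, …, A^{k-1}b}`. -/
noncomputable def krylov {ι : Type*} [Fintype ι] [DecidableEq ι]
    (A : Matrix ι ι ℝ) (k : ℕ) (b : ι → ℝ) : Submodule ℝ (ι → ℝ) :=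
  Submodule.span ℝ (Set.range fun i : Fin k => (A ^ (i : ℕ)).mulVec b)

/-- `b` satisfies the cross equality for `A` and step `k`. -/
def CrossEq {ι : Type*} [Fintype ι] [DecidableEq ι]
    (A : Matrix ι ι ℝ) (k : ℕ) (b : ι → ℝ) : Prop :=
  ∀ r s : ι → ℝ, IsGmresRes A k b r → IsGmresRes Aᵀ k ((euclNorm r)⁻¹ • r) s →
    b = (euclNorm s)⁻¹ • s

/-- The Krylov matrix `K(v) = [Av, A²v, …, A^k v]`. -/
noncomputable def Kmat {n : ℕ} (A : Matrix (Fin n) (Fin n) ℝ) (k : ℕ) (v : Fin n → ℝ) :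
    Matrix (Fin n) (Fin k) ℝ :=
  Matrix.of fun i j => (A ^ ((j : ℕ) + 1)).mulVec v i

/-- `γ(v) = (K(v)ᵀK(v))⁻¹ K(v)ᵀ v`. -/
noncomputable def gammaVec {n : ℕ} (A : Matrix (Fin n) (Fin n) ℝ) (k : ℕ) (v : Fin n → ℝ) :
    Fin k → ℝ :=
  ((Kmat A k v)ᵀ * Kmat A k v)⁻¹ *ᵥ ((Kmat A k v)ᵀ *ᵥ v)

/-- `g(v) = min_{c ∈ ℝ^k} ‖v - K(v)c‖²`. -/
noncomputable def gFun {n : ℕ} (A : Matrix (Fin n) (Fin n) ℝ) (k : ℕ) (v : Fin n → ℝ) : ℝ :=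
  sInf {s : ℝ | ∃ c : Fin k → ℝ, s = euclNorm (v - Kmat A k v *ᵥ c) ^ 2}

/-- `p(z; c) = 1 - ∑_{j=1}^k c_j z^j`. -/
noncomputable def pPoly {k : ℕ} (c : Fin k → ℝ) : Polynomial ℝ :=
  1 - ∑ j : Fin k, Polynomial.C (c j) * Polynomial.X ^ ((j : ℕ) + 1)

/-- `f(c,v) = ‖p(A;c)v‖²`. -/
noncomputable def fFun {n k : ℕ} (A : Matrix (Fin n) (Fin n) ℝ) (c : Fin k → ℝ)
    (v : Fin n → ℝ) : ℝ :=
  euclNorm ((Polynomial.aeval A (pPoly c)).mulVec v) ^ 2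

/-- `F(c,v) = f(c,v)/(vᵀv)`. -/
noncomputable def FFun {n k : ℕ} (A : Matrix (Fin n) (Fin n) ℝ) (c : Fin k → ℝ)
    (v : Fin n → ℝ) : ℝ :=
  fFun A c v / edot v v

/-- The Toh matrix `A(ω, ε)`. -/
noncomputable def tohMatrix (ω ε : ℝ) : Matrix (Fin 4) (Fin 4) ℝ :=
  !![1, ε, 0, 0; 0, -1, ω / ε, 0; 0, 0, 1, ε; 0, 0, 0, -1]

/-- `p` is a `k`-th worst-case GMRES polynomial of `A`. -/
def IsWCPoly {ι : Type*} [Fintype ι] [DecidableEq ι]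
    (A : Matrix ι ι ℝ) (k : ℕ) (p : Polynomial ℝ) : Prop :=
  IsPik k p ∧ ∃ b : ι → ℝ, euclNorm b = 1 ∧
    (∀ q : Polynomial ℝ, IsPik k q →
      euclNorm ((Polynomial.aeval A p).mulVec b) ≤ euclNorm ((Polynomial.aeval A q).mulVec b)) ∧
    euclNorm ((Polynomial.aeval A p).mulVec b) = Psi A k

/-- The spectral (Euclidean operator) norm of a real matrix. -/
noncomputable def specNorm {ι : Type*} [Fintype ι] (M : Matrix ι ι ℝ) : ℝ :=
  sSup {r : ℝ | ∃ v : ι → ℝ, euclNorm v = 1 ∧ r = euclNorm (M *ᵥ v)}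

/-- The `k`-th ideal GMRES approximation `φ_k(A) = min_{p ∈ π_k} ‖p(A)‖`. -/
noncomputable def phiIdeal {ι : Type*} [Fintype ι] [DecidableEq ι]
    (A : Matrix ι ι ℝ) (k : ℕ) : ℝ :=
  sInf {r : ℝ | ∃ p : Polynomial ℝ, IsPik k p ∧ r = specNorm (Polynomial.aeval A p)}

/-- Complexification of a real matrix. -/
noncomputable def matC {ι : Type*} (A : Matrix ι ι ℝ) : Matrix ι ι ℂ :=
  A.map fun x => (x : ℂ)

/-- Complexification of a real vector. -/
noncomputable def vecC {ι : Type*} (b : ι → ℝ) : ι → ℂ := fun i => (b i : ℂ)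

/-- `Ψ_{k,ℂ,ℝ}(A)`: complex polynomials, real initial vectors. -/
noncomputable def PsiCR {ι : Type*} [Fintype ι] [DecidableEq ι]
    (A : Matrix ι ι ℝ) (k : ℕ) : ℝ :=
  sSup {r : ℝ | ∃ b : ι → ℝ, euclNorm b = 1 ∧
    r = sInf {s : ℝ | ∃ p : Polynomial ℂ, IsPikC k p ∧
      s = euclNormC ((Polynomial.aeval (matC A) p).mulVec (vecC b))}}

/-- `Ψ_{k,ℂ,ℂ}(A)`: complex polynomials, complex initial vectors. -/
noncomputable def PsiCC {ι : Type*} [Fintype ι] [DecidableEq ι]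
    (A : Matrix ι ι ℝ) (k : ℕ) : ℝ :=
  sSup {r : ℝ | ∃ b : ι → ℂ, euclNormC b = 1 ∧
    r = sInf {s : ℝ | ∃ p : Polynomial ℂ, IsPikC k p ∧
      s = euclNormC ((Polynomial.aeval (matC A) p).mulVec b)}}

/-- `Ψ_{k,ℝ,ℂ}(A)`: real polynomials, complex initial vectors. -/
noncomputable def PsiRC {ι : Type*} [Fintype ι] [DecidableEq ι]
    (A : Matrix ι ι ℝ) (k : ℕ) : ℝ :=
  sSup {r : ℝ | ∃ b : ι → ℂ, euclNormC b = 1 ∧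
    r = sInf {s : ℝ | ∃ p : Polynomial ℝ, IsPik k p ∧
      s = euclNormC ((Polynomial.aeval (matC A) (p.map (algebraMap ℝ ℂ))).mulVec b)}}

/-- `φ_{k,ℝ,ℝ}(A)`. -/
noncomputable def phiRR {ι : Type*} [Fintype ι] [DecidableEq ι]
    (A : Matrix ι ι ℝ) (k : ℕ) : ℝ :=
  sInf {r : ℝ | ∃ p : Polynomial ℝ, IsPik k p ∧
    r = sSup {s : ℝ | ∃ b : ι → ℝ, euclNorm b = 1 ∧
      s = euclNorm ((Polynomial.aeval A p).mulVec b)}}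

/-- `φ_{k,ℂ,ℝ}(A)`. -/
noncomputable def phiCR {ι : Type*} [Fintype ι] [DecidableEq ι]
    (A : Matrix ι ι ℝ) (k : ℕ) : ℝ :=
  sInf {r : ℝ | ∃ p : Polynomial ℂ, IsPikC k p ∧
    r = sSup {s : ℝ | ∃ b : ι → ℝ, euclNorm b = 1 ∧
      s = euclNormC ((Polynomial.aeval (matC A) p).mulVec (vecC b))}}

/-- `φ_{k,ℝ,ℂ}(A)`. -/
noncomputable def phiRC {ι : Type*} [Fintype ι] [DecidableEq ι]
    (A : Matrix ι ι ℝ) (k : ℕ) : ℝ :=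
  sInf {r : ℝ | ∃ p : Polynomial ℝ, IsPik k p ∧
    r = sSup {s : ℝ | ∃ b : ι → ℂ, euclNormC b = 1 ∧
      s = euclNormC ((Polynomial.aeval (matC A) (p.map (algebraMap ℝ ℂ))).mulVec b)}}

/-- `φ_{k,ℂ,ℂ}(A)`. -/
noncomputable def phiCC {ι : Type*} [Fintype ι] [DecidableEq ι]
    (A : Matrix ι ι ℝ) (k : ℕ) : ℝ :=
  sInf {r : ℝ | ∃ p : Polynomial ℂ, IsPikC k p ∧
    r = sSup {s : ℝ | ∃ b : ι → ℂ, euclNormC b = 1 ∧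
      s = euclNormC ((Polynomial.aeval (matC A) p).mulVec b)}}

/-!
Writing `r = p₀(A) b`, the residuals `p(A) b` with `p ∈ π_k` are exactly the vectors
`r + ∑_{1 ≤ j ≤ k} c_j A^j b`, so if `r` is orthogonal to `A b, …, A^k b` then `r` is the
shortest of them. If moreover `b` is a maximal right singular vector of `p₀(A)`, then `(p₀, b)`
is a saddle point and the ideal and the worst-case values agree.

For the Toh matrix, `A²` is a direct sum of two copies of the Jordan block `J = [1, ω; 0, 1]`,
living on the coordinates `0, 2` and `1, 3`. Placing `(u, 1)` on the first copy and `i (u, 1)` on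
the second makes the odd powers of `A` drop out of the real inner products, because the
contributions of the two copies cancel. What remains is a saddle point `(1 - κ z, (u, 1))` for the
first GMRES step on `J`: for `|ω| ≥ 2` zero lies in the field of values of `J`, so `κ = 0` works
with `u` a real root of `u² + ω u + 1`, and for `|ω| ≤ 2` one takes `κ = (4 - ω²) / (4 + ω²)` and
`u = -ω / 2`.
-/

section EuclideanNorms

variable {ι : Type*} [Fintype ι]

theorem euclNorm_eq_norm_toLp (v : ι → ℝ) : euclNorm v = ‖WithLp.toLp 2 v‖ := by
  simp [euclNorm, EuclideanSpace.norm_eq]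

theorem euclNormC_eq_norm_toLp (v : ι → ℂ) : euclNormC v = ‖WithLp.toLp 2 v‖ := by
  simp [euclNormC, EuclideanSpace.norm_eq]

theorem euclNorm_sq (v : ι → ℝ) : euclNorm v ^ 2 = ∑ i, v i ^ 2 :=
  Real.sq_sqrt (Finset.sum_nonneg fun _ _ => sq_nonneg _)

theorem euclNormC_sq (v : ι → ℂ) :
    euclNormC v ^ 2 = euclNorm (fun i => (v i).re) ^ 2 + euclNorm (fun i => (v i).im) ^ 2 := by
  rw [euclNormC, Real.sq_sqrt (Finset.sum_nonneg fun _ _ => sq_nonneg _), euclNorm_sq,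
    euclNorm_sq, ← Finset.sum_add_distrib]
  refine Finset.sum_congr rfl fun i _ => ?_
  rw [Complex.sq_norm, Complex.normSq_apply]
  ring

theorem euclNorm_nonneg (v : ι → ℝ) : 0 ≤ euclNorm v := Real.sqrt_nonneg _

theorem euclNormC_nonneg (v : ι → ℂ) : 0 ≤ euclNormC v := Real.sqrt_nonneg _

theorem euclNormC_pos {v : ι → ℂ} (hv : v ≠ 0) : 0 < euclNormC v := by
  simpa [euclNormC_eq_norm_toLp] using hv

theorem euclNormC_smul (c : ℂ) (v : ι → ℂ) : euclNormC (c • v) = ‖c‖ * euclNormC v := by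
  rw [euclNormC_eq_norm_toLp, euclNormC_eq_norm_toLp, WithLp.toLp_smul, norm_smul]

theorem euclNormC_le_euclNormC_add_of_orthogonal {r d : ι → ℂ} (h : (d ⬝ᵥ star r).re = 0) :
    euclNormC r ≤ euclNormC (r + d) := by
  rw [euclNormC_eq_norm_toLp, euclNormC_eq_norm_toLp, WithLp.toLp_add]
  refine le_of_sq_le_sq ?_ (norm_nonneg _)
  have h_inner : RCLike.re (inner ℂ (WithLp.toLp 2 r) (WithLp.toLp 2 d)) = 0 := h
  rw [norm_add_sq (𝕜 := ℂ), h_inner]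
  linarith [sq_nonneg ‖WithLp.toLp 2 d‖]

end EuclideanNorms

section SpectralNorm

variable {ι : Type*} [Fintype ι]

theorem specNorm_nonneg (M : Matrix ι ι ℝ) : 0 ≤ specNorm M := by
  refine Real.sSup_nonneg ?_
  rintro _ ⟨v, -, rfl⟩
  exact euclNorm_nonneg _

theorem specNorm_eq_norm_toEuclideanCLM [DecidableEq ι] (M : Matrix ι ι ℝ) :
    specNorm M = ‖toEuclideanCLM (𝕜 := ℝ) M‖ := by
  rw [specNorm, ← ContinuousLinearMap.sSup_sphere_eq_norm]
  congr 1
  ext r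
  constructor
  · rintro ⟨v, hv, rfl⟩
    exact ⟨WithLp.toLp 2 v, by simpa [← euclNorm_eq_norm_toLp] using hv,
      by simp [euclNorm_eq_norm_toLp]⟩
  · rintro ⟨x, hx, rfl⟩
    exact ⟨x.ofLp, by simpa [euclNorm_eq_norm_toLp] using hx,
      by simp [euclNorm_eq_norm_toLp, ← ofLp_toEuclideanCLM]⟩

theorem euclNorm_mulVec_le (M : Matrix ι ι ℝ) (v : ι → ℝ) :
    euclNorm (M *ᵥ v) ≤ specNorm M * euclNorm v := by
  classical
  rw [specNorm_eq_norm_toEuclideanCLM, euclNorm_eq_norm_toLp, euclNorm_eq_norm_toLp,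
    ← toEuclideanCLM_toLp]
  exact ContinuousLinearMap.le_opNorm _ _

theorem specNorm_le {M : Matrix ι ι ℝ} {c : ℝ} (hc : 0 ≤ c)
    (h : ∀ v, euclNorm (M *ᵥ v) ≤ c * euclNorm v) : specNorm M ≤ c := by
  refine Real.sSup_le ?_ hc
  rintro _ ⟨v, hv, rfl⟩
  simpa [hv] using h v

theorem re_matC_mulVec (M : Matrix ι ι ℝ) (b : ι → ℂ) (i : ι) :
    ((matC M *ᵥ b) i).re = (M *ᵥ fun j => (b j).re) i := by
  simp [matC, mulVec, dotProduct]

theorem im_matC_mulVec (M : Matrix ι ι ℝ) (b : ι → ℂ) (i : ι) :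
    ((matC M *ᵥ b) i).im = (M *ᵥ fun j => (b j).im) i := by
  simp [matC, mulVec, dotProduct]

theorem re_dotProduct_star_matC_mulVec (M N : Matrix ι ι ℝ) (b : ι → ℂ) :
    ((matC M *ᵥ b) ⬝ᵥ star (matC N *ᵥ b)).re =
      (M *ᵥ fun i => (b i).re) ⬝ᵥ (N *ᵥ fun i => (b i).re) +
        (M *ᵥ fun i => (b i).im) ⬝ᵥ (N *ᵥ fun i => (b i).im) := by
  simp [dotProduct, Finset.sum_add_distrib, re_matC_mulVec, im_matC_mulVec]

theorem euclNormC_matC_mulVec_sq (M : Matrix ι ι ℝ) (b : ι → ℂ) :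
    euclNormC (matC M *ᵥ b) ^ 2 =
      euclNorm (M *ᵥ fun i => (b i).re) ^ 2 + euclNorm (M *ᵥ fun i => (b i).im) ^ 2 := by
  simp only [euclNormC_sq, re_matC_mulVec, im_matC_mulVec]

theorem euclNormC_matC_mulVec_le (M : Matrix ι ι ℝ) (b : ι → ℂ) :
    euclNormC (matC M *ᵥ b) ≤ specNorm M * euclNormC b := by
  refine le_of_sq_le_sq ?_ (mul_nonneg (specNorm_nonneg M) (euclNormC_nonneg b))
  have bound_sq (v : ι → ℝ) : euclNorm (M *ᵥ v) ^ 2 ≤ specNorm M ^ 2 * euclNorm v ^ 2 := by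
    rw [← mul_pow]
    exact pow_le_pow_left₀ (euclNorm_nonneg _) (euclNorm_mulVec_le M v) 2
  calc euclNormC (matC M *ᵥ b) ^ 2
      = euclNorm (M *ᵥ fun i => (b i).re) ^ 2 + euclNorm (M *ᵥ fun i => (b i).im) ^ 2 :=
        euclNormC_matC_mulVec_sq M b
    _ ≤ specNorm M ^ 2 * euclNorm (fun i => (b i).re) ^ 2 +
        specNorm M ^ 2 * euclNorm (fun i => (b i).im) ^ 2 := add_le_add (bound_sq _) (bound_sq _)
    _ = (specNorm M * euclNormC b) ^ 2 := by rw [mul_pow, euclNormC_sq, mul_add]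

end SpectralNorm

section SaddlePoint

variable {ι : Type*} [Fintype ι] [DecidableEq ι] {A : Matrix ι ι ℝ} {k : ℕ}

/-- The GMRES residual norm `min_{p ∈ π_{k,ℝ}} ‖p(A)b‖` of a complex vector `b`, over which `PsiRC`
takes the maximum. The matrix `p(A)` is formed over `ℝ` and complexified afterwards. -/
noncomputable def gmresValC (A : Matrix ι ι ℝ) (k : ℕ) (b : ι → ℂ) : ℝ :=
  sInf {s : ℝ | ∃ p : ℝ[X], IsPik k p ∧ s = euclNormC (matC (aeval A p) *ᵥ b)}

theorem matC_eq_mapMatrix (A : Matrix ι ι ℝ) : matC A = (Algebra.ofId ℝ ℂ).mapMatrix A := rfl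

theorem aeval_matC (A : Matrix ι ι ℝ) (p : ℝ[X]) :
    aeval (matC A) (p.map (algebraMap ℝ ℂ)) = matC (aeval A p) := by
  rw [aeval_map_algebraMap, matC_eq_mapMatrix, matC_eq_mapMatrix, aeval_algHom_apply]

theorem PsiRC_eq_sSup_gmresValC (A : Matrix ι ι ℝ) (k : ℕ) :
    PsiRC A k = sSup {r : ℝ | ∃ b : ι → ℂ, euclNormC b = 1 ∧ r = gmresValC A k b} := by
  simp only [PsiRC, gmresValC, aeval_matC]

theorem isPik_one (k : ℕ) : IsPik k 1 := by simp [IsPik]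

theorem gmresValC_le {p : ℝ[X]} (hp : IsPik k p) (b : ι → ℂ) :
    gmresValC A k b ≤ euclNormC (matC (aeval A p) *ᵥ b) := by
  refine csInf_le ⟨0, ?_⟩ ⟨p, hp, rfl⟩
  rintro _ ⟨q, -, rfl⟩
  exact euclNormC_nonneg _

theorem le_gmresValC {b : ι → ℂ} {c : ℝ}
    (h : ∀ p, IsPik k p → c ≤ euclNormC (matC (aeval A p) *ᵥ b)) : c ≤ gmresValC A k b := by
  refine le_csInf ⟨_, 1, isPik_one k, rfl⟩ ?_
  rintro _ ⟨p, hp, rfl⟩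
  exact h p hp

theorem phiIdeal_nonneg (A : Matrix ι ι ℝ) (k : ℕ) : 0 ≤ phiIdeal A k := by
  refine Real.sInf_nonneg ?_
  rintro _ ⟨p, -, rfl⟩
  exact specNorm_nonneg _

theorem phiIdeal_le {p : ℝ[X]} (hp : IsPik k p) : phiIdeal A k ≤ specNorm (aeval A p) := by
  refine csInf_le ⟨0, ?_⟩ ⟨p, hp, rfl⟩
  rintro _ ⟨q, -, rfl⟩
  exact specNorm_nonneg _

theorem gmresValC_le_phiIdeal {b : ι → ℂ} (hb : euclNormC b = 1) :
    gmresValC A k b ≤ phiIdeal A k := by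
  refine le_csInf ⟨_, 1, isPik_one k, rfl⟩ ?_
  rintro _ ⟨p, hp, rfl⟩
  calc gmresValC A k b ≤ euclNormC (matC (aeval A p) *ᵥ b) := gmresValC_le hp b
    _ ≤ specNorm (aeval A p) * euclNormC b := euclNormC_matC_mulVec_le _ b
    _ = specNorm (aeval A p) := by rw [hb, mul_one]

theorem gmresValC_le_PsiRC {b : ι → ℂ} (hb : euclNormC b = 1) : gmresValC A k b ≤ PsiRC A k := by
  rw [PsiRC_eq_sSup_gmresValC]
  refine le_csSup ⟨phiIdeal A k, ?_⟩ ⟨b, hb, rfl⟩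
  rintro _ ⟨b', hb', rfl⟩
  exact gmresValC_le_phiIdeal hb'

theorem PsiRC_le_phiIdeal (A : Matrix ι ι ℝ) (k : ℕ) : PsiRC A k ≤ phiIdeal A k := by
  rw [PsiRC_eq_sSup_gmresValC]
  refine Real.sSup_le ?_ (phiIdeal_nonneg A k)
  rintro _ ⟨b, hb, rfl⟩
  exact gmresValC_le_phiIdeal hb

theorem phiIdeal_eq_PsiRC_of_saddle {p₀ : ℝ[X]} {b : ι → ℂ} (hp₀ : IsPik k p₀) (hb : b ≠ 0)
    (h : ∀ p, IsPik k p →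
      specNorm (aeval A p₀) * euclNormC b ≤ euclNormC (matC (aeval A p) *ᵥ b)) :
    phiIdeal A k = PsiRC A k := by
  have hb' : 0 < euclNormC b := euclNormC_pos hb
  have norm_scale : ‖((euclNormC b)⁻¹ : ℂ)‖ = (euclNormC b)⁻¹ := by
    rw [norm_inv, Complex.norm_real, Real.norm_of_nonneg hb'.le]
  have unit : euclNormC (((euclNormC b)⁻¹ : ℂ) • b) = 1 := by
    rw [euclNormC_smul, norm_scale, inv_mul_cancel₀ hb'.ne']
  refine le_antisymm ?_ (PsiRC_le_phiIdeal A k)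
  calc phiIdeal A k ≤ specNorm (aeval A p₀) := phiIdeal_le hp₀
    _ ≤ gmresValC A k (((euclNormC b)⁻¹ : ℂ) • b) := le_gmresValC fun p hp => by
        rw [mulVec_smul, euclNormC_smul, norm_scale, inv_mul_eq_div, le_div_iff₀ hb']
        exact h p hp
    _ ≤ PsiRC A k := gmresValC_le_PsiRC unit

theorem IsPik.aeval_eq {R : Type*} [Ring R] [Algebra ℝ R] {p : ℝ[X]} (hp : IsPik k p) (a : R) :
    aeval a p = ∑ j ∈ Finset.range k, p.coeff (j + 1) • a ^ (j + 1) + 1 := by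
  rw [aeval_eq_sum_range' (Nat.lt_succ_of_le hp.1), Finset.sum_range_succ',
    coeff_zero_eq_eval_zero, hp.2, pow_zero, one_smul]

theorem matC_mulVec_aeval_eq_add {p p₀ : ℝ[X]} (hp : IsPik k p) (hp₀ : IsPik k p₀)
    (A : Matrix ι ι ℝ) (b : ι → ℂ) :
    matC (aeval A p) *ᵥ b = matC (aeval A p₀) *ᵥ b +
      ∑ j ∈ Finset.range k,
        (p.coeff (j + 1) - p₀.coeff (j + 1)) • (matC (A ^ (j + 1)) *ᵥ b) := by
  have aeval_sub : aeval A p = aeval A p₀ +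
      ∑ j ∈ Finset.range k, (p.coeff (j + 1) - p₀.coeff (j + 1)) • A ^ (j + 1) := by
    simp only [hp.aeval_eq, hp₀.aeval_eq, sub_smul, Finset.sum_sub_distrib]
    abel
  rw [aeval_sub]
  simp only [matC_eq_mapMatrix, map_add, map_sum, map_smul, add_mulVec, sum_mulVec, smul_mulVec]

/-- The orthogonality conditions characterise `p₀` as the GMRES polynomial of `b`; only the real
part of the inner product enters because the competing polynomials are real. -/
theorem phiIdeal_eq_PsiRC_of_orthogonal {p₀ : ℝ[X]} {b : ι → ℂ} (hp₀ : IsPik k p₀) (hb : b ≠ 0)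
    (hmax : ∀ v : ι → ℝ, euclNorm (aeval A p₀ *ᵥ v) * euclNormC b ≤
      euclNormC (matC (aeval A p₀) *ᵥ b) * euclNorm v)
    (horth : ∀ j < k, ((matC (A ^ (j + 1)) *ᵥ b) ⬝ᵥ star (matC (aeval A p₀) *ᵥ b)).re = 0) :
    phiIdeal A k = PsiRC A k := by
  have hb' : 0 < euclNormC b := euclNormC_pos hb
  have attained : specNorm (aeval A p₀) * euclNormC b ≤ euclNormC (matC (aeval A p₀) *ᵥ b) := by
    rw [← le_div_iff₀ hb']
    refine specNorm_le (div_nonneg (euclNormC_nonneg _) hb'.le) fun v => ?_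
    rw [div_mul_eq_mul_div, le_div_iff₀ hb']
    exact hmax v
  refine phiIdeal_eq_PsiRC_of_saddle hp₀ hb fun p hp => attained.trans ?_
  rw [matC_mulVec_aeval_eq_add hp hp₀]
  refine euclNormC_le_euclNormC_add_of_orthogonal ?_
  rw [sum_dotProduct, Complex.re_sum]
  refine Finset.sum_eq_zero fun j hj => ?_
  rw [smul_dotProduct, Complex.smul_re, horth j (Finset.mem_range.1 hj), smul_zero]

end SaddlePoint

section Toh

variable {ω ε : ℝ}

theorem tohMatrix_sq (ω : ℝ) (hε : ε ≠ 0) :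
    tohMatrix ω ε ^ 2 = !![1, 0, ω, 0; 0, 1, 0, ω; 0, 0, 1, 0; 0, 0, 0, 1] := by
  rw [pow_two]
  ext i j
  fin_cases i <;> fin_cases j <;>
    simp [tohMatrix, mul_apply, Fin.sum_univ_four, hε, mul_div_cancel₀]

theorem tohMatrix_cube (ω : ℝ) (hε : ε ≠ 0) :
    tohMatrix ω ε ^ 3 =
      !![1, ε, ω, ω * ε; 0, -1, ω / ε, -ω; 0, 0, 1, ε; 0, 0, 0, -1] := by
  rw [pow_succ, tohMatrix_sq ω hε]
  ext i j
  fin_cases i <;> fin_cases j <;> simp [tohMatrix, mul_apply, Fin.sum_univ_four]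

/-- The polynomial `1 - κ z²` of `π_3`, the lift of the degree-one polynomial `1 - κ z` along
`z ↦ z²`. -/
noncomputable def tohPoly (κ : ℝ) : ℝ[X] := 1 - C κ * X ^ 2

/-- The complex initial vector placing `(u, 1)` on the coordinates `0, 2` and `i (u, 1)` on the
coordinates `1, 3`; it is not normalised. -/
noncomputable def tohVec (u : ℝ) : Fin 4 → ℂ := ![u, u * Complex.I, 1, Complex.I]

theorem isPik_tohPoly (κ : ℝ) : IsPik 3 (tohPoly κ) := by
  refine ⟨?_, by simp [tohPoly]⟩
  rw [tohPoly]
  compute_degree!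

theorem aeval_tohPoly (ω κ : ℝ) (hε : ε ≠ 0) :
    aeval (tohMatrix ω ε) (tohPoly κ) =
      !![1 - κ, 0, -(κ * ω), 0; 0, 1 - κ, 0, -(κ * ω); 0, 0, 1 - κ, 0; 0, 0, 0, 1 - κ] := by
  have : aeval (tohMatrix ω ε) (tohPoly κ) = 1 - κ • tohMatrix ω ε ^ 2 := by
    simp [tohPoly, Algebra.smul_def]
  rw [this, tohMatrix_sq ω hε]
  ext i j
  fin_cases i <;> fin_cases j <;> simp

theorem re_tohVec (u : ℝ) : (fun i => (tohVec u i).re) = ![u, 0, 1, 0] := by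
  ext i
  fin_cases i <;> simp [tohVec]

theorem im_tohVec (u : ℝ) : (fun i => (tohVec u i).im) = ![0, u, 0, 1] := by
  ext i
  fin_cases i <;> simp [tohVec]

theorem tohVec_ne_zero (u : ℝ) : tohVec u ≠ 0 := fun h => by
  simpa [tohVec] using congrFun h 2

theorem euclNormC_tohVec_sq (u : ℝ) : euclNormC (tohVec u) ^ 2 = 2 * (u ^ 2 + 1) := by
  rw [euclNormC_sq, re_tohVec, im_tohVec, euclNorm_sq, euclNorm_sq]
  simp only [Fin.sum_univ_four, cons_val]
  ring

theorem euclNorm_aeval_tohPoly_mulVec_sq (ω κ : ℝ) (hε : ε ≠ 0) (v : Fin 4 → ℝ) :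
    euclNorm (aeval (tohMatrix ω ε) (tohPoly κ) *ᵥ v) ^ 2 =
      (((1 - κ) * v 0 - κ * ω * v 2) ^ 2 + ((1 - κ) * v 2) ^ 2) +
        (((1 - κ) * v 1 - κ * ω * v 3) ^ 2 + ((1 - κ) * v 3) ^ 2) := by
  rw [aeval_tohPoly ω κ hε, euclNorm_sq]
  simp only [mulVec, dotProduct, Fin.sum_univ_four, of_apply, cons_val]
  ring

theorem euclNormC_aeval_tohPoly_mulVec_tohVec_sq (ω κ u : ℝ) (hε : ε ≠ 0) :
    euclNormC (matC (aeval (tohMatrix ω ε) (tohPoly κ)) *ᵥ tohVec u) ^ 2 =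
      2 * (((1 - κ) * u - κ * ω) ^ 2 + (1 - κ) ^ 2) := by
  rw [euclNormC_matC_mulVec_sq, re_tohVec, im_tohVec, euclNorm_aeval_tohPoly_mulVec_sq ω κ hε,
    euclNorm_aeval_tohPoly_mulVec_sq ω κ hε]
  simp only [cons_val]
  ring

theorem re_dotProduct_tohVec_eq_zero {κ u : ℝ} (hε : ε ≠ 0)
    (horth : ((1 - κ) * u - κ * ω) * (u + ω) + (1 - κ) = 0) :
    ∀ j < 3, ((matC (tohMatrix ω ε ^ (j + 1)) *ᵥ tohVec u) ⬝ᵥ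
      star (matC (aeval (tohMatrix ω ε) (tohPoly κ)) *ᵥ tohVec u)).re = 0 := by
  intro j hj
  rw [re_dotProduct_star_matC_mulVec, re_tohVec, im_tohVec, aeval_tohPoly ω κ hε]
  interval_cases j
  · rw [zero_add, pow_one, tohMatrix]
    simp only [mulVec, dotProduct, Fin.sum_univ_four, of_apply, cons_val]
    ring
  · rw [tohMatrix_sq ω hε]
    simp only [mulVec, dotProduct, Fin.sum_univ_four, of_apply, cons_val]
    linear_combination 2 * horth
  · rw [tohMatrix_cube ω hε]
    simp only [mulVec, dotProduct, Fin.sum_univ_four, of_apply, cons_val]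
    ring

/-- `hmax` says that `(u, 1)` is a maximal right singular vector of `1 - κ J` with
`J = [1, ω; 0, 1]`, and `horth` that its image is orthogonal to `J (u, 1)`. -/
theorem phiIdeal_tohMatrix_eq_PsiRC_of_jordan_saddle (κ u : ℝ) (hε : ε ≠ 0)
    (hmax : ∀ x y : ℝ, (((1 - κ) * x - κ * ω * y) ^ 2 + ((1 - κ) * y) ^ 2) * (u ^ 2 + 1) ≤
      (((1 - κ) * u - κ * ω) ^ 2 + (1 - κ) ^ 2) * (x ^ 2 + y ^ 2))
    (horth : ((1 - κ) * u - κ * ω) * (u + ω) + (1 - κ) = 0) :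
    phiIdeal (tohMatrix ω ε) 3 = PsiRC (tohMatrix ω ε) 3 := by
  refine phiIdeal_eq_PsiRC_of_orthogonal (isPik_tohPoly κ) (tohVec_ne_zero u) (fun v => ?_)
    (re_dotProduct_tohVec_eq_zero hε horth)
  refine le_of_sq_le_sq ?_ (mul_nonneg (euclNormC_nonneg _) (euclNorm_nonneg _))
  rw [mul_pow, mul_pow, euclNorm_aeval_tohPoly_mulVec_sq ω κ hε, euclNormC_tohVec_sq,
    euclNormC_aeval_tohPoly_mulVec_tohVec_sq ω κ u hε, euclNorm_sq, Fin.sum_univ_four]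
  linarith [hmax (v 0) (v 2), hmax (v 1) (v 3)]

theorem phiIdeal_tohMatrix_eq_PsiRC_of_sq_le_four (hω : ω ^ 2 ≤ 4) (hε : ε ≠ 0) :
    phiIdeal (tohMatrix ω ε) 3 = PsiRC (tohMatrix ω ε) 3 := by
  have hD : 4 + ω ^ 2 ≠ 0 := by positivity
  refine phiIdeal_tohMatrix_eq_PsiRC_of_jordan_saddle ((4 - ω ^ 2) / (4 + ω ^ 2)) (-ω / 2) hε
    (fun x y => ?_) (by field_simp; ring)
  have defect :
      (((1 - (4 - ω ^ 2) / (4 + ω ^ 2)) * (-ω / 2) - (4 - ω ^ 2) / (4 + ω ^ 2) * ω) ^ 2 +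
        (1 - (4 - ω ^ 2) / (4 + ω ^ 2)) ^ 2) * (x ^ 2 + y ^ 2) -
      (((1 - (4 - ω ^ 2) / (4 + ω ^ 2)) * x - (4 - ω ^ 2) / (4 + ω ^ 2) * ω * y) ^ 2 +
        ((1 - (4 - ω ^ 2) / (4 + ω ^ 2)) * y) ^ 2) * ((-ω / 2) ^ 2 + 1) =
      ω ^ 2 * (4 - ω ^ 2) / (4 + ω ^ 2) * (x + ω / 2 * y) ^ 2 := by
    field_simp
    ring
  refine sub_nonneg.1 (defect.symm ▸ mul_nonneg (div_nonneg ?_ (by positivity)) (sq_nonneg _))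
  exact mul_nonneg (sq_nonneg ω) (sub_nonneg.2 hω)

theorem phiIdeal_tohMatrix_eq_PsiRC_of_four_le_sq (hω : 4 ≤ ω ^ 2) (hε : ε ≠ 0) :
    phiIdeal (tohMatrix ω ε) 3 = PsiRC (tohMatrix ω ε) 3 := by
  have h_sqrt : √(ω ^ 2 - 4) ^ 2 = ω ^ 2 - 4 := Real.sq_sqrt (sub_nonneg.2 hω)
  refine phiIdeal_tohMatrix_eq_PsiRC_of_jordan_saddle 0 ((√(ω ^ 2 - 4) - ω) / 2) hε
    (fun x y => le_of_eq (by ring)) ?_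
  linear_combination h_sqrt / 4

theorem toh_ideal_eq_worst_case_complex_vectors_general (ω ε : ℝ) (hε : ε ≠ 0) :
    phiIdeal (tohMatrix ω ε) 3 = PsiRC (tohMatrix ω ε) 3 := by
  rcases le_total (ω ^ 2) 4 with hω | hω
  · exact phiIdeal_tohMatrix_eq_PsiRC_of_sq_le_four hω hε
  · exact phiIdeal_tohMatrix_eq_PsiRC_of_four_le_sq hω hε

end Toh

/-- For the Toh matrix `A = A(ω,ε)` with `0 < ω < 2`, `ε > 0`,
`φ_3(A) = Ψ_{3,ℝ,ℂ}(A)`. -/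
theorem toh_ideal_eq_worst_case_complex_vectors (ω ε : ℝ)
    (hω1 : 0 < ω) (hω2 : ω < 2) (hε : 0 < ε) :
    phiIdeal (tohMatrix ω ε) 3 = PsiRC (tohMatrix ω ε) 3 :=
  toh_ideal_eq_worst_case_complex_vectors_general ω ε hε.ne'
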